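/- arXiv:2304.11494 — 3 statements merged into one kernel-verified Lean document; each statement's English description precedes it below -/
import Mathlib

section
/- Let D be a rich, anonymous, tree-single-peaked domain for a marriage market with n ≥ 3 men and n women. There exists a stable and strategy-proof matching rule on D if and only if the men's common preference set or the women's common preference set (or both) satisfies the top dominance property. -/
/-- `r` is a (strict) preference, i.e., a strict total order. -/
def IsPref {X : Type*} (r : X → X → Prop) : Prop := IsStrictTotalOrder X r

/-- `x` is the top (most preferred) element of `r`. -/
def TopOf {X : Type*} (r : X → X → Prop) (x : X) : Prop := ∀ y, y ≠ x → r x y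

/-- `a` lies on the (unique) path from `x` to `y` in `G`. -/
def OnPath {X : Type*} (G : SimpleGraph X) (a x y : X) : Prop :=
  ∀ p : G.Walk x y, p.IsPath → a ∈ p.support

/-- Single-peakedness with respect to a tree `G`. -/
def SPTree {X : Type*} (G : SimpleGraph X) (r : X → X → Prop) : Prop :=
  ∀ t a b, TopOf r t → OnPath G a t b → a = b ∨ r a b

/-- Classical single-peakedness with respect to a strict linear order `lt`. -/
def SPLine {X : Type*} (lt r : X → X → Prop) : Prop :=
  ∀ t x y, TopOf r t → (((x = t ∨ lt t x) ∧ lt x y) ∨ (lt y x ∧ (x = t ∨ lt x t))) → r x y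

/-- Richness: every alternative is the top of some admissible preference. -/
def Rich {X : Type*} (D : Set (X → X → Prop)) : Prop := ∀ x, ∃ P ∈ D, TopOf P x

/-- Top dominance property. -/
def TD {X : Type*} (D : Set (X → X → Prop)) : Prop :=
  ∀ x y z : X, (∃ P ∈ D, P x y ∧ P y z) → ¬ ∃ P ∈ D, P x z ∧ P z y

/-- Rotation property. -/
def Rotation {X : Type*} (D : Set (X → X → Prop)) : Prop :=
  ∀ x y z t : X, (∃ P ∈ D, P x y ∧ P y z ∧ P z t) → ¬ ∃ P ∈ D, P z x ∧ P x t

/-- `G` is a path graph (linear tree) on `k` vertices. -/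
def IsPathG {X : Type*} (G : SimpleGraph X) (k : ℕ) : Prop :=
  ∃ e : X ≃ Fin k, ∀ a b, G.Adj a b ↔ ((e a : ℕ) + 1 = e b ∨ (e b : ℕ) + 1 = e a)

/-- `G` is a star graph: some center adjacent to all other vertices, no other edges. -/
def IsStarG {X : Type*} (G : SimpleGraph X) : Prop :=
  ∃ c, ∀ a b, G.Adj a b ↔ a ≠ b ∧ (a = c ∨ b = c)

/-- A preference relation over the `n` agents of the opposite side. -/
abbrev PrefRel (n : ℕ) := Fin n → Fin n → Prop

/-- A preference profile: one preference (over women) per man, one (over men) per woman. -/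
abbrev Profile (n : ℕ) := (Fin n → PrefRel n) × (Fin n → PrefRel n)

/-- Membership in the anonymous product domain with men's set `Dm` and women's set `Dw`. -/
def InDomain {n : ℕ} (Dm Dw : Set (PrefRel n)) (p : Profile n) : Prop :=
  (∀ m, p.1 m ∈ Dm) ∧ (∀ w, p.2 w ∈ Dw)

/-- Pair `(m, w)` blocks matching `μ` at profile `p`. -/
def Blocks {n : ℕ} (p : Profile n) (μ : Fin n ≃ Fin n) (m w : Fin n) : Prop :=
  p.1 m w (μ m) ∧ p.2 w m (μ.symm w)

/-- Matching `μ` is stable at profile `p`. -/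
def StableAt {n : ℕ} (p : Profile n) (μ : Fin n ≃ Fin n) : Prop := ∀ m w, ¬ Blocks p μ m w

/-- The matching rule `φ` is stable on the domain. -/
def StableRule {n : ℕ} (Dm Dw : Set (PrefRel n)) (φ : Profile n → (Fin n ≃ Fin n)) : Prop :=
  ∀ p, InDomain Dm Dw p → StableAt p (φ p)

/-- Strategy-proofness on the domain: no unilateral in-domain misreport gives a strictly
better match. -/
def SP {n : ℕ} (Dm Dw : Set (PrefRel n)) (φ : Profile n → (Fin n ≃ Fin n)) : Prop :=
  ∀ p, InDomain Dm Dw p →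
    (∀ m P', P' ∈ Dm → ¬ p.1 m (φ (Function.update p.1 m P', p.2) m) (φ p m)) ∧
    (∀ w P', P' ∈ Dw → ¬ p.2 w ((φ (p.1, Function.update p.2 w P')).symm w) ((φ p).symm w))

/-- Non-bossiness: a unilateral report change leaving one's own match unchanged leaves the
whole matching unchanged. -/
def NonBossy {n : ℕ} (Dm Dw : Set (PrefRel n)) (φ : Profile n → (Fin n ≃ Fin n)) : Prop :=
  ∀ p, InDomain Dm Dw p →
    (∀ m P', P' ∈ Dm → φ (Function.update p.1 m P', p.2) m = φ p m →
       φ (Function.update p.1 m P', p.2) = φ p) ∧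
    (∀ w P', P' ∈ Dw → (φ (p.1, Function.update p.2 w P')).symm w = (φ p).symm w →
       φ (p.1, Function.update p.2 w P') = φ p)

/-- Man `m` is weakly better off under `μ'` than under `μ` (true preferences from `p`). -/
def MWeakBetter {n : ℕ} (p : Profile n) (μ μ' : Fin n ≃ Fin n) (m : Fin n) : Prop :=
  μ' m = μ m ∨ p.1 m (μ' m) (μ m)

/-- Woman `w` is weakly better off under `μ'` than under `μ`. -/
def WWeakBetter {n : ℕ} (p : Profile n) (μ μ' : Fin n ≃ Fin n) (w : Fin n) : Prop :=
  μ'.symm w = μ.symm w ∨ p.2 w (μ'.symm w) (μ.symm w)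

/-- Group strategy-proofness on the domain. -/
def GSP {n : ℕ} (Dm Dw : Set (PrefRel n)) (φ : Profile n → (Fin n ≃ Fin n)) : Prop :=
  ∀ p, InDomain Dm Dw p →
    ¬ ∃ (p' : Profile n) (S : Set (Fin n ⊕ Fin n)),
      InDomain Dm Dw p' ∧
      (∀ m, Sum.inl m ∉ S → p'.1 m = p.1 m) ∧
      (∀ w, Sum.inr w ∉ S → p'.2 w = p.2 w) ∧
      (∀ m, Sum.inl m ∈ S → MWeakBetter p (φ p) (φ p') m) ∧
      (∀ w, Sum.inr w ∈ S → WWeakBetter p (φ p) (φ p') w) ∧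
      ((∃ m, Sum.inl m ∈ S ∧ p.1 m (φ p' m) (φ p m)) ∨
       (∃ w, Sum.inr w ∈ S ∧ p.2 w ((φ p').symm w) ((φ p).symm w)))


namespace Aux

open Classical in
/-- rank of an alternative -/
noncomputable def rk {n : ℕ} (P : PrefRel n) (x : Fin n) : ℕ :=
  (Finset.univ.filter (fun y => P y x)).card

lemma rk_lt {n : ℕ} {P : PrefRel n} (h : IsPref P) (x y : Fin n) :
    P x y ↔ rk P x < rk P y := by
  classical
  have hs : IsStrictTotalOrder (Fin n) P := h
  have key : ∀ u v, P u v → rk P u < rk P v := by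
    intro u v huv
    apply Finset.card_lt_card
    rw [Finset.ssubset_iff_of_subset]
    · exact ⟨u, by simpa using huv, by simpa using hs.irrefl u⟩
    · intro t ht
      simp only [Finset.mem_filter, Finset.mem_univ, true_and] at ht ⊢
      exact hs.trans _ _ _ ht huv
  refine ⟨key x y, fun hlt => ?_⟩
  rcases trichotomous_of P x y with h1 | h1 | h1
  · exact h1
  · subst h1; omega
  · have := key _ _ h1; omega

lemma rk_inj {n : ℕ} {P : PrefRel n} (h : IsPref P) : Function.Injective (rk P) := by
  intro x y hxy
  have hs : IsStrictTotalOrder (Fin n) P := h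
  rcases trichotomous_of P x y with h1 | h1 | h1
  · rw [rk_lt h] at h1; omega
  · exact h1
  · rw [rk_lt h] at h1; omega

variable {n : ℕ}

def Good (rm rw : Fin n → Fin n → ℕ) (f : Fin n → Fin n) : Prop :=
  ∀ m w, rm m w < rm m (f m) → ∃ m', f m' = w ∧ rw w m' < rw w m

def Stb (rm rw : Fin n → Fin n → ℕ) (g : Fin n ≃ Fin n) : Prop :=
  ∀ m w, rm m w < rm m (g m) → rw w m < rw w (g.symm w) → False

def Ge (rm : Fin n → Fin n → ℕ) (f g : Fin n → Fin n) : Prop :=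
  ∀ m, rm m (f m) ≤ rm m (g m)

lemma step {rm rw : Fin n → Fin n → ℕ} (hrm : ∀ m, Function.Injective (rm m))
    {f : Fin n → Fin n} (hf : Good rm rw f) {m1 m2 : Fin n}
    (hne : m1 ≠ m2) (he : f m1 = f m2) (hlt : rw (f m2) m1 < rw (f m2) m2) {w' : Fin n}
    (hw : rm m2 (f m2) < rm m2 w')
    (hw' : ∀ v, rm m2 (f m2) < rm m2 v → rm m2 w' ≤ rm m2 v) :
    Good rm rw (Function.update f m2 w') ∧
    ∀ g : Fin n ≃ Fin n, Stb rm rw g → Ge rm f g → Ge rm (Function.update f m2 w') g := by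
  constructor
  · intro m w h
    by_cases hm : m = m2
    · subst hm
      rw [Function.update_self] at h
      by_cases h1 : w = f m
      · subst h1
        exact ⟨m1, by rw [Function.update_of_ne hne, he], hlt⟩
      · have h2 : rm m w < rm m (f m) := by
          have h3 : rm m w ≠ rm m (f m) := fun h3 => h1 (hrm m h3)
          have h4 := hw' w
          omega
        obtain ⟨m', h5, h6⟩ := hf m w h2
        refine ⟨m', ?_, h6⟩
        rw [Function.update_of_ne, h5]
        rintro rfl
        exact h1 h5.symm
    · rw [Function.update_of_ne hm] at h
      obtain ⟨m', h5, h6⟩ := hf m w h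
      by_cases h7 : m' = m2
      · subst h7
        subst h5
        exact ⟨m1, by rw [Function.update_of_ne hne, he], by omega⟩
      · exact ⟨m', by rw [Function.update_of_ne h7, h5], h6⟩
  · intro g hg hge m
    by_cases hm : m = m2
    · subst hm
      rw [Function.update_self]
      apply hw'
      have h1 := hge m
      rcases Nat.lt_or_ge (rm m (f m)) (rm m (g m)) with h2 | h2
      · exact h2
      · exfalso
        have h3 : f m = g m := hrm m (le_antisymm h1 h2)
        refine hg m1 (f m) ?_ ?_
        · have h4 := hge m1
          have h5 : rm m1 (f m1) ≠ rm m1 (g m1) := by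
            intro h5
            have h6 := hrm m1 h5
            exact hne (g.injective (by rw [← h6, he, h3]))
          rw [he] at h4 h5
          omega
        · have : g.symm (f m) = m := by rw [h3]; simp
          rw [this]; exact hlt
    · rw [Function.update_of_ne hm]; exact hge m

lemma next {rm rw : Fin n → Fin n → ℕ} (hrm : ∀ m, Function.Injective (rm m))
    {f : Fin n → Fin n} (hf : Good rm rw f) {m1 m2 : Fin n}
    (hne : m1 ≠ m2) (he : f m1 = f m2) :
    ∃ w', rm m2 (f m2) < rm m2 w' ∧
      ∀ v, rm m2 (f m2) < rm m2 v → rm m2 w' ≤ rm m2 v := by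
  have hns : ¬ Function.Surjective f := by
    intro h
    exact hne ((Finite.injective_iff_surjective.mpr h) he)
  simp only [Function.Surjective, not_forall, not_exists] at hns
  obtain ⟨w0, hw0⟩ := hns
  have h0 : rm m2 (f m2) < rm m2 w0 := by
    by_contra hcon
    have h1 : rm m2 w0 ≠ rm m2 (f m2) := fun h => hw0 m2 (hrm m2 h).symm
    obtain ⟨m', h, _⟩ := hf m2 w0 (by omega)
    exact hw0 _ h
  obtain ⟨w', h1, h2⟩ := Finset.exists_min_image
    (Finset.univ.filter (fun v => rm m2 (f m2) < rm m2 v)) (rm m2) ⟨w0, by simpa using h0⟩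
  exact ⟨w', by simpa using h1, fun v hv => h2 v (by simpa using hv)⟩

lemma sum_lt (rm : Fin n → Fin n → ℕ) (f : Fin n → Fin n) (m : Fin n) (w' : Fin n)
    (hw : rm m (f m) < rm m w') :
    ∑ i, rm i (f i) < ∑ i, rm i (Function.update f m w' i) := by
  apply Finset.sum_lt_sum
  · intro i _
    by_cases h : i = m
    · subst h; rw [Function.update_self]; exact hw.le
    · rw [Function.update_of_ne h]
  · exact ⟨m, Finset.mem_univ _, by rw [Function.update_self]; exact hw⟩

/-- extremal principle -/
lemma extremal (rm : Fin n → Fin n → ℕ) (A : (Fin n → Fin n) → Prop) (h : ∃ f, A f) :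
    ∃ f, A f ∧ ∀ m w', rm m (f m) < rm m w' → ¬ A (Function.update f m w') := by
  classical
  obtain ⟨f0, h0⟩ := h
  obtain ⟨f, h1, h2⟩ := Finset.exists_max_image (Finset.univ.filter A)
    (fun f => ∑ i, rm i (f i)) ⟨f0, by simpa using h0⟩
  refine ⟨f, by simpa using h1, fun m w' hw hA => ?_⟩
  have := h2 _ (by simpa using hA)
  have := sum_lt rm f m w' hw
  omega

lemma exists_top (rm : Fin n → Fin n → ℕ) :
    ∃ f : Fin n → Fin n, ∀ m w, rm m (f m) ≤ rm m w := by
  have : ∀ m, ∃ w, ∀ v, rm m w ≤ rm m v := by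
    intro m
    obtain ⟨w, _, h⟩ := Finset.exists_min_image Finset.univ (rm m) ⟨m, Finset.mem_univ _⟩
    exact ⟨w, fun v => h v (Finset.mem_univ _)⟩
  choose f hf using this
  exact ⟨f, hf⟩

lemma good_of_top {rm rw : Fin n → Fin n → ℕ} {f : Fin n → Fin n}
    (hf : ∀ m w, rm m (f m) ≤ rm m w) : Good rm rw f := by
  intro m w h
  have := hf m w
  omega

lemma stb_of_inj {rm rw : Fin n → Fin n → ℕ} {f : Fin n → Fin n} (hf : Good rm rw f)
    (hi : Function.Injective f) : ∃ g : Fin n ≃ Fin n, (⇑g = f) ∧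
      ∀ rw', Good rm rw' f → Stb rm rw' g := by
  refine ⟨Equiv.ofBijective f ⟨hi, Finite.injective_iff_surjective.mp hi⟩, rfl, ?_⟩
  intro rw' hf' m w h1 h2
  obtain ⟨m', h3, h4⟩ := hf' m w h1
  have : (Equiv.ofBijective f ⟨hi, Finite.injective_iff_surjective.mp hi⟩).symm w = m' := by
    rw [Equiv.symm_apply_eq]; exact h3.symm
  rw [this] at h2
  omega

lemma conflict {rm rw : Fin n → Fin n → ℕ} (hrw : ∀ m, Function.Injective (rw m))
    {f : Fin n → Fin n} (hi : ¬ Function.Injective f) :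
    ∃ m1 m2, m1 ≠ m2 ∧ f m1 = f m2 ∧ rw (f m2) m1 < rw (f m2) m2 := by
  simp only [Function.Injective, not_forall] at hi
  obtain ⟨a, b, h1, h2⟩ := hi
  rcases lt_trichotomy (rw (f b) a) (rw (f b) b) with h | h | h
  · exact ⟨a, b, h2, h1, h⟩
  · exact absurd (hrw _ h) h2
  · exact ⟨b, a, fun h => h2 h.symm, h1.symm, by rw [h1]; exact h⟩

def MOpt (rm rw : Fin n → Fin n → ℕ) (g : Fin n ≃ Fin n) : Prop :=
  Stb rm rw g ∧ ∀ g', Stb rm rw g' → Ge rm g g'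

lemma exists_mopt {rm rw : Fin n → Fin n → ℕ} (hrm : ∀ m, Function.Injective (rm m))
    (hrw : ∀ m, Function.Injective (rw m)) : ∃ g, MOpt rm rw g := by
  obtain ⟨f0, hf0⟩ := exists_top rm
  obtain ⟨f, ⟨hf, hge⟩, hmax⟩ := extremal rm
    (fun f => Good rm rw f ∧ ∀ g : Fin n ≃ Fin n, Stb rm rw g → Ge rm f g)
    ⟨f0, good_of_top hf0, fun g _ m => hf0 m _⟩
  by_cases hi : Function.Injective f
  · obtain ⟨g, h1, h2⟩ := stb_of_inj hf hi
    exact ⟨g, h2 rw hf, fun g' hg' => by rw [h1]; exact hge g' hg'⟩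
  · exfalso
    obtain ⟨m1, m2, hne, he, hlt⟩ := conflict (rm := rm) hrw hi
    obtain ⟨w', hw, hw'⟩ := next hrm hf hne he
    obtain ⟨h1, h2⟩ := step hrm hf hne he hlt hw hw'
    exact hmax m2 w' hw ⟨h1, fun g hg => h2 g hg (hge g hg)⟩

lemma ge_antisymm {rm : Fin n → Fin n → ℕ} (hrm : ∀ m, Function.Injective (rm m))
    {f g : Fin n → Fin n} (h1 : Ge rm f g) (h2 : Ge rm g f) : f = g :=
  funext fun m => hrm m (le_antisymm (h1 m) (h2 m))

/-- blocking lemma -/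
lemma blocking {rm rw : Fin n → Fin n → ℕ} (hrm : ∀ m, Function.Injective (rm m))
    (hrw : ∀ m, Function.Injective (rw m)) {g : Fin n ≃ Fin n} (hg : MOpt rm rw g)
    (μ : Fin n ≃ Fin n) (m0 : Fin n) (h0 : rm m0 (μ m0) < rm m0 (g m0)) :
    ∃ m w, ¬ rm m (μ m) < rm m (g m) ∧ rm m w < rm m (μ m) ∧ rw w m < rw w (μ.symm w) := by
  by_cases hcase : ∀ m, rm m (g m) ≤ rm m (μ m) → rm (μ.symm (g m)) (g (μ.symm (g m))) ≤
      rm (μ.symm (g m)) (g m)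
  · -- case two
    -- partners of the improving men agree
    have hW : ∀ m, rm m (μ m) < rm m (g m) →
        rm (μ.symm (g m)) (g m) < rm (μ.symm (g m)) (g (μ.symm (g m))) := by
      -- the map m ↦ μ.symm (g m) preserves the complement
      classical
      let τ : Fin n ≃ Fin n := g.trans μ.symm
      let S : Finset (Fin n) := Finset.univ.filter (fun m => rm m (g m) ≤ rm m (μ m))
      have hS : ∀ m, m ∈ S ↔ rm m (g m) ≤ rm m (μ m) := by intro m; simp [S]
      have hmap : S.image τ ⊆ S := by
        intro x hx
        obtain ⟨m, hm, rfl⟩ := Finset.mem_image.mp hx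
        rw [hS] at hm ⊢
        have := hcase m hm
        simpa [τ] using this
      have heq : S.image τ = S := Finset.eq_of_subset_of_card_le hmap
        (by rw [Finset.card_image_of_injective _ τ.injective])
      intro m hm
      by_contra hcon
      have h1 : τ m ∈ S := by rw [hS]; simp [τ]; omega
      rw [← heq] at h1
      obtain ⟨m', h2, h3⟩ := Finset.mem_image.mp h1
      have := τ.injective h3
      subst this
      rw [hS] at h2
      omega
    obtain ⟨f0, hf0⟩ := exists_top rm
    obtain ⟨f, ⟨hf, hge, m', hm', hne'⟩, hmax⟩ := extremal rm
      (fun f => Good rm rw f ∧ Ge rm f g ∧ ∃ m, rm m (μ m) < rm m (g m) ∧ f m ≠ g m)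
      ⟨f0, good_of_top hf0, fun m => hf0 m _, m0, h0, fun h => by
        have := hf0 m0 (μ m0)
        rw [h] at this
        omega⟩
    by_cases hi : Function.Injective f
    · exfalso
      obtain ⟨g', h1, h2⟩ := stb_of_inj hf hi
      have h3 := hg.2 g' (h2 rw hf)
      rw [h1] at h3
      exact hne' (congrFun (ge_antisymm hrm hge h3) m')
    · obtain ⟨m1, m2, hne, he, hlt⟩ := conflict (rm := rm) hrw hi
      obtain ⟨w', hw, hw'⟩ := next hrm hf hne he
      obtain ⟨h1, h2⟩ := step hrm hf hne he hlt hw hw'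
      have h3 := hmax m2 w' hw
      have h4 : ∀ m, rm m (μ m) < rm m (g m) → Function.update f m2 w' m = g m := by
        intro m hm
        by_contra hcon
        exact h3 ⟨h1, h2 g hg.1 hge, m, hm, hcon⟩
      have h5 : m' = m2 := by
        by_contra h6
        have := h4 m' hm'
        rw [Function.update_of_ne h6] at this
        exact hne' this
      subst h5
      have h6 : w' = g m' := by simpa using h4 m' hm'
      -- ms is the partner of w' under μ
      have h7 := hW m' hm'
      set ms := μ.symm (g m') with hms
      have hμ : μ ms = g m' := by rw [hms]; simp
      rw [← hμ] at h7
      have h8 : ms ≠ m' := by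
        intro h
        rw [h] at hμ
        rw [hμ] at hm'
        omega
      have h9 : f ms = g ms := by
        have := h4 ms h7
        rwa [Function.update_of_ne h8] at this
      rw [hμ, ← h9] at h7
      obtain ⟨m'', h10, h11⟩ := hf ms (g m') h7
      have h12 : ¬ rm m'' (μ m'') < rm m'' (g m'') := by
        intro h
        have h13 := h4 m'' h
        by_cases h14 : m'' = m'
        · rw [h14] at h10; exact hne' h10
        · rw [Function.update_of_ne h14, h10] at h13
          exact h14 (g.injective h13).symm
      refine ⟨m'', g m', h12, ?_, h11⟩
      have h15 := hge m''
      rw [h10] at h15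
      have h16 : rm m'' (g m') ≠ rm m'' (μ m'') := by
        intro h
        have h17 := hrm _ h
        rw [← hμ] at h17
        have := μ.injective h17
        rw [this] at h11
        omega
      omega
  · push Not at hcase
    obtain ⟨m, h1, h2⟩ := hcase
    set m' := μ.symm (g m) with hm'
    have hμ : μ m' = g m := by rw [hm']; simp
    have hmm : m ≠ m' := by
      intro h
      rw [← h] at h2
      omega
    refine ⟨m, g m, by omega, ?_, ?_⟩
    · have : rm m (g m) ≠ rm m (μ m) := by
        intro h
        have := hrm _ h
        rw [← hμ] at this
        exact hmm (μ.injective this).symm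
      omega
    · rw [← hm']
      have h3 := hg.1 m' (g m) h2
      simp only [Equiv.symm_apply_apply, imp_false, not_lt] at h3
      have : rw (g m) m ≠ rw (g m) m' := fun h => hmm (hrw _ h)
      omega

/-- women side comparison -/
lemma women {rm rw rw' : Fin n → Fin n → ℕ} (hrm : ∀ m, Function.Injective (rm m))
    (hrw : ∀ m, Function.Injective (rw m)) (hrw' : ∀ m, Function.Injective (rw' m))
    (w : Fin n) (hagree : ∀ v, v ≠ w → rw' v = rw v)
    {g g' : Fin n ≃ Fin n} (hg : MOpt rm rw g) (hg' : MOpt rm rw' g')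
    (hlt : rw w (g'.symm w) < rw w (g.symm w)) :
    ∃ m1 m2, rw w (g'.symm w) < rw w m1 ∧ rw w m1 < rw w m2 ∧
      rw' w (g'.symm w) < rw' w m2 ∧ rw' w m2 < rw' w m1 := by
  obtain ⟨f0, hf0⟩ := exists_top rm
  obtain ⟨f, ⟨hf, hf', hge, hge'⟩, hmax⟩ := extremal rm
    (fun f => Good rm rw f ∧ Good rm rw' f ∧ Ge rm f g ∧ Ge rm f g')
    ⟨f0, good_of_top hf0, good_of_top hf0, fun m => hf0 m _, fun m => hf0 m _⟩
  by_cases hi : Function.Injective f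
  · exfalso
    obtain ⟨h, h1, h2⟩ := stb_of_inj hf hi
    have h3 := hg.2 h (h2 rw hf)
    have h4 := hg'.2 h (h2 rw' hf')
    rw [h1] at h3 h4
    have h5 : (⇑g : Fin n → Fin n) = g' :=
      (ge_antisymm hrm hge h3).symm.trans (ge_antisymm hrm hge' h4)
    have h6 : g = g' := DFunLike.coe_injective h5
    subst h6
    omega
  · obtain ⟨m1, m2, hne, he, hl⟩ := conflict (rm := rm) hrw hi
    by_cases hb : rw' (f m2) m1 < rw' (f m2) m2
    · exfalso
      obtain ⟨w', hw, hw'⟩ := next hrm hf hne he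
      obtain ⟨h1, h2⟩ := step hrm hf hne he hl hw hw'
      obtain ⟨h3, h4⟩ := step hrm hf' hne he hb hw hw'
      exact hmax m2 w' hw ⟨h1, h3, h2 g hg.1 hge, h4 g' hg'.1 hge'⟩
    · have hfw : f m2 = w := by
        by_contra h
        rw [hagree _ h] at hb
        exact hb hl
      rw [hfw] at he hl hb
      have hb' : rw' w m2 < rw' w m1 := by
        have : rw' w m1 ≠ rw' w m2 := fun h => hne (hrw' _ h)
        omega
      -- holder under g is at least m1
      have k1 : rw w (g.symm w) ≤ rw w m1 := by
        by_contra h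
        have h1 := hge m1
        rw [he] at h1
        have h2 : rm m1 w ≠ rm m1 (g m1) := by
          intro h2
          have h3 := hrm _ h2
          rw [h3] at h
          simp at h
        exact hg.1 m1 w (by omega) (by omega)
      have k2 : rw' w (g'.symm w) ≤ rw' w m2 := by
        by_contra h
        have h1 := hge' m2
        rw [hfw] at h1
        have h2 : rm m2 w ≠ rm m2 (g' m2) := by
          intro h2
          have h3 := hrm _ h2
          rw [h3] at h
          simp at h
        exact hg'.1 m2 w (by omega) (by omega)
      have k3 : rw' w (g'.symm w) ≠ rw' w m2 := by
        intro h
        have := hrw' _ h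
        rw [this] at hlt
        omega
      exact ⟨m1, m2, by omega, hl, by omega, hb'⟩

theorem exists_rule (Dm Dw : Set (PrefRel n))
    (hDm : ∀ P ∈ Dm, IsPref P) (hDw : ∀ P ∈ Dw, IsPref P) (hTD : TD Dw) :
    ∃ φ : Profile n → (Fin n ≃ Fin n), StableRule Dm Dw φ ∧ SP Dm Dw φ := by
  classical
  have hex : ∀ p : Profile n, ∃ g : Fin n ≃ Fin n, InDomain Dm Dw p →
      MOpt (fun m => rk (p.1 m)) (fun w => rk (p.2 w)) g := by
    intro p
    by_cases h : InDomain Dm Dw p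
    · obtain ⟨g, hg⟩ := exists_mopt (rm := fun m => rk (p.1 m)) (rw := fun w => rk (p.2 w))
        (fun m => rk_inj (hDm _ (h.1 m))) (fun w => rk_inj (hDw _ (h.2 w)))
      exact ⟨g, fun _ => hg⟩
    · exact ⟨Equiv.refl _, fun h' => absurd h' h⟩
  choose φ hφ using hex
  refine ⟨φ, ?_, ?_⟩
  · intro p hp m w hb
    have h := (hφ p hp).1 m w
    obtain ⟨h1, h2⟩ := hb
    rw [rk_lt (hDm _ (hp.1 m))] at h1
    rw [rk_lt (hDw _ (hp.2 w))] at h2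
    exact h h1 h2
  · intro p hp
    constructor
    · intro m P' hP' hlt
      have hp' : InDomain Dm Dw (Function.update p.1 m P', p.2) := by
        refine ⟨fun i => ?_, hp.2⟩
        by_cases hi : i = m
        · subst hi; simpa using hP'
        · simpa [Function.update_of_ne hi] using hp.1 i
      rw [rk_lt (hDm _ (hp.1 m))] at hlt
      obtain ⟨m'', w, h1, h2, h3⟩ := blocking (rm := fun m => rk (p.1 m))
        (rw := fun w => rk (p.2 w)) (fun m => rk_inj (hDm _ (hp.1 m)))
        (fun w => rk_inj (hDw _ (hp.2 w))) (hφ p hp)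
        (φ (Function.update p.1 m P', p.2)) m hlt
      have hne : m'' ≠ m := by
        rintro rfl
        exact h1 hlt
      have := (hφ _ hp').1 m'' w
      simp only [Function.update_of_ne hne] at this
      exact this h2 h3
    · intro w Q' hQ' hlt
      have hp' : InDomain Dm Dw (p.1, Function.update p.2 w Q') := by
        refine ⟨hp.1, fun i => ?_⟩
        by_cases hi : i = w
        · subst hi; simpa using hQ'
        · simpa [Function.update_of_ne hi] using hp.2 i
      rw [rk_lt (hDw _ (hp.2 w))] at hlt
      obtain ⟨m1, m2, h1, h2, h3, h4⟩ := women (rm := fun m => rk (p.1 m))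
        (rw := fun w => rk (p.2 w)) (rw' := fun v => rk (Function.update p.2 w Q' v))
        (fun m => rk_inj (hDm _ (hp.1 m)))
        (fun w => rk_inj (hDw _ (hp.2 w))) (fun v => rk_inj (hDw _ (hp'.2 v))) w
        (fun v hv => by simp [Function.update_of_ne hv]) (hφ p hp) (hφ _ hp') hlt
      simp only [Function.update_self] at h3 h4
      rw [← rk_lt (hDw _ (hp.2 w))] at h1 h2
      rw [← rk_lt (hDw _ hQ')] at h3 h4
      exact hTD _ _ _ ⟨_, hp.2 w, h1, h2⟩ ⟨_, hQ', h3, h4⟩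

theorem exists_rule' (Dm Dw : Set (PrefRel n))
    (hDm : ∀ P ∈ Dm, IsPref P) (hDw : ∀ P ∈ Dw, IsPref P) (hTD : TD Dm) :
    ∃ φ : Profile n → (Fin n ≃ Fin n), StableRule Dm Dw φ ∧ SP Dm Dw φ := by
  obtain ⟨ψ, h1, h2⟩ := exists_rule Dw Dm hDw hDm hTD
  refine ⟨fun p => (ψ (p.2, p.1)).symm, ?_, ?_⟩
  · intro p hp m w hb
    exact h1 (p.2, p.1) ⟨hp.2, hp.1⟩ w m ⟨hb.2, hb.1⟩
  · intro p hp
    have := h2 (p.2, p.1) ⟨hp.2, hp.1⟩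
    exact ⟨this.2, this.1⟩

/-! ### Trees -/

def Sep {X : Type*} (G : SimpleGraph X) (a x y : X) : Prop := ∀ p : G.Walk x y, a ∈ p.support

lemma Sep.onPath {X : Type*} {G : SimpleGraph X} {a x y : X} (h : Sep G a x y) :
    OnPath G a x y := fun p _ => h p

lemma Sep.symm {X : Type*} {G : SimpleGraph X} {a x y : X} (h : Sep G a x y) :
    Sep G a y x := fun p => by simpa using h p.reverse

lemma Sep.split {X : Type*} {G : SimpleGraph X} {a x y : X} (h : Sep G a x y) (t : X) :
    Sep G a t x ∨ Sep G a t y := by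
  by_contra hcon
  simp only [Sep, not_or, not_forall] at hcon
  obtain ⟨⟨p, hp⟩, q, hq⟩ := hcon
  have := h (p.reverse.append q)
  rw [SimpleGraph.Walk.mem_support_append_iff] at this
  simp at this
  tauto

lemma median_aux {X : Type*} [DecidableEq X] {G : SimpleGraph X} (hG : G.IsAcyclic) (z : X)
    {x y : X} (p : G.Walk x y) : ∃ v, Sep G v y z ∧ Sep G v x y ∧ Sep G v x z := by
  induction p with
  | nil => exact ⟨_, fun p => p.start_mem_support, fun p => p.start_mem_support,
      fun p => p.start_mem_support⟩
  | @cons x x' y hadj p ih =>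
    obtain ⟨v, h1, h2, h3⟩ := ih
    by_cases hx : v = x'
    · subst hx
      by_cases hA : Sep G v x y ∧ Sep G v x z
      · exact ⟨v, h1, hA.1, hA.2⟩
      · -- x lies between v and one of y, z
        have key : ∀ u, ¬ Sep G v x u → Sep G x u v := by
          intro u hu q
          by_contra hq
          simp only [Sep, not_forall] at hu
          obtain ⟨r, hr⟩ := hu
          have hb := (SimpleGraph.isAcyclic_iff_forall_adj_isBridge.mp hG) hadj
          rw [SimpleGraph.isBridge_iff_forall_walk_mem_edges] at hb
          have := hb (r.append q)
          rw [SimpleGraph.Walk.edges_append, List.mem_append] at this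
          rcases this with h | h
          · exact hr (SimpleGraph.Walk.snd_mem_support_of_mem_edges _ h)
          · exact hq (SimpleGraph.Walk.fst_mem_support_of_mem_edges _ h)
        have key2 : Sep G x y z := by
          rcases not_and_or.mp hA with h | h
          · have h4 := key _ h
            intro q
            have := h4 (q.takeUntil v (h1 q))
            exact SimpleGraph.Walk.support_takeUntil_subset_support _ _ this
          · have h4 := key _ h
            apply Sep.symm
            intro q
            have := h4 (q.takeUntil v (h1.symm q))
            exact SimpleGraph.Walk.support_takeUntil_subset_support _ _ this
        exact ⟨x, key2, fun p => p.start_mem_support, fun p => p.start_mem_support⟩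
    · have : ∀ u, Sep G v x' u → Sep G v x u := by
        intro u hu q
        have := hu (SimpleGraph.Walk.cons hadj.symm q)
        simpa [hx] using this
      exact ⟨v, h1, this _ h2, this _ h3⟩

lemma exists_topOf {P : PrefRel n} (h : IsPref P) (x : Fin n) : ∃ t, TopOf P t := by
  obtain ⟨t, _, ht⟩ := Finset.exists_min_image Finset.univ (rk P) ⟨x, Finset.mem_univ _⟩
  refine ⟨t, fun y hy => ?_⟩
  rw [rk_lt h]
  have h1 := ht y (Finset.mem_univ _)
  have h2 : rk P t ≠ rk P y := fun h3 => hy (rk_inj h h3).symm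
  omega

lemma normalize {D : Set (PrefRel n)} (hD : ∀ P ∈ D, IsPref P) (hr : Rich D)
    {G : SimpleGraph (Fin n)} (hG : G.IsTree) (hsp : ∀ P ∈ D, SPTree G P) (hTD : ¬ TD D) :
    ∃ x y z, ∃ P1 ∈ D, ∃ P2 ∈ D, ∃ P3 ∈ D,
      (P1 x y ∧ P1 y z) ∧ (P2 x z ∧ P2 z y) ∧ (P3 y x ∧ P3 x z) := by
  simp only [TD, not_forall, not_not] at hTD
  obtain ⟨x, y, z, ⟨P1, hP1, h1, h2⟩, P2, hP2, h3, h4⟩ := hTD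
  obtain ⟨p⟩ := hG.1.preconnected x y
  obtain ⟨v, hyz, hxy, hxz⟩ := median_aux hG.2 z p
  have main : ∀ P ∈ D, ∀ a b, P x a → P a b → Sep G v a b → Sep G v x a → Sep G v x b →
      P v a ∨ v = a := by
    intro P hP a b hxa hab hsab hsxa hsxb
    obtain ⟨t, ht⟩ := exists_topOf (hD P hP) x
    have hs : IsStrictTotalOrder (Fin n) P := hD P hP
    have hS : ∀ c, Sep G v t c → v = c ∨ P v c := fun c hc => hsp P hP t v c ht hc.onPath
    rcases hsxa.split t with h | h
    · rcases hS _ h with h | h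
      · subst h; exact Or.inl hxa
      · exact Or.inl (hs.trans _ _ _ h hxa)
    · rcases hS _ h with h | h
      · exact Or.inr h
      · exact Or.inl h
  have hs1 : IsStrictTotalOrder (Fin n) P1 := hD P1 hP1
  have hs2 : IsStrictTotalOrder (Fin n) P2 := hD P2 hP2
  have ey := main P1 hP1 y z h1 h2 hyz hxy hxz
  have ez := main P2 hP2 z y h3 h4 hyz.symm hxz hxy
  have low : ∀ P ∈ D, ∀ a b, P x a → P a b → Sep G v a b → Sep G v x a → Sep G v x b →
      v ≠ b := by
    rintro P hP a b hxa hab hsab hsxa hsxb rfl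
    have hs : IsStrictTotalOrder (Fin n) P := hD P hP
    rcases main P hP a v hxa hab hsab hsxa hsxb with h | h
    · exact hs.irrefl _ (hs.trans _ _ _ h hab)
    · subst h; exact hs.irrefl _ hab
  have nz := low P1 hP1 y z h1 h2 hyz hxy hxz
  have ny := low P2 hP2 z y h3 h4 hyz.symm hxz hxy
  have ey := ey.resolve_right ny
  have ez := ez.resolve_right nz
  obtain ⟨P3, hP3, ht⟩ := hr y
  exact ⟨v, y, z, P1, hP1, P2, hP2, P3, hP3, ⟨ey, h2⟩, ⟨ez, h4⟩, ht v ny,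
    ((hsp P3 hP3) y v z ht hyz.onPath).resolve_left nz⟩

lemma exists_perm {a b c x y z : Fin n} (hab : a ≠ b) (hac : a ≠ c) (hbc : b ≠ c)
    (hxy : x ≠ y) (hxz : x ≠ z) (hyz : y ≠ z) :
    ∃ σ : Fin n ≃ Fin n, σ a = x ∧ σ b = y ∧ σ c = z := by
  obtain ⟨σ, h1⟩ : ∃ σ : Fin n ≃ Fin n, σ a = x := ⟨Equiv.swap a x, by simp⟩
  obtain ⟨τ, h2, h3⟩ : ∃ σ : Fin n ≃ Fin n, σ a = x ∧ σ b = y := by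
    refine ⟨σ.trans (Equiv.swap (σ b) y), ?_, by simp⟩
    rw [Equiv.trans_apply, h1, Equiv.swap_apply_of_ne_of_ne _ hxy]
    rw [← h1]; exact fun h => hab (σ.injective h)
  refine ⟨τ.trans (Equiv.swap (τ c) z), ?_, ?_, by simp⟩
  · rw [Equiv.trans_apply, h2, Equiv.swap_apply_of_ne_of_ne _ hxz]
    rw [← h2]; exact fun h => hac (τ.injective h)
  · rw [Equiv.trans_apply, h3, Equiv.swap_apply_of_ne_of_ne _ hyz]
    rw [← h3]; exact fun h => hbc (τ.injective h)

lemma reduce {p : Profile n} {μ σ : Fin n ≃ Fin n} (hst : StableAt p μ) {a b c x y z : Fin n}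
    (h1 : σ a = x) (h2 : σ b = y) (h3 : σ c = z)
    (hm : ∀ m, m ≠ a → m ≠ b → m ≠ c → TopOf (p.1 m) (σ m))
    (hw : ∀ w, w ≠ x → w ≠ y → w ≠ z → TopOf (p.2 w) (σ.symm w)) :
    ∀ m, (m = a ∨ m = b ∨ m = c) → (μ m = x ∨ μ m = y ∨ μ m = z) := by
  have key : ∀ m, m ≠ a → m ≠ b → m ≠ c → μ m = σ m := by
    intro m ha hb hc
    by_contra hne
    refine hst m (σ m) ⟨hm m ha hb hc _ hne, ?_⟩
    have := hw (σ m) (by rw [← h1]; simpa using ha) (by rw [← h2]; simpa using hb)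
      (by rw [← h3]; simpa using hc) (μ.symm (σ m))
    rw [Equiv.symm_apply_apply] at this
    apply this
    rw [Ne, Equiv.symm_apply_eq]
    exact fun h => hne h.symm
  intro m hmm
  by_contra hcon
  simp only [not_or] at hcon
  obtain ⟨k1, k2, k3⟩ := hcon
  have e := key (σ.symm (μ m)) (by rw [Ne, Equiv.symm_apply_eq, h1]; exact k1)
    (by rw [Ne, Equiv.symm_apply_eq, h2]; exact k2)
    (by rw [Ne, Equiv.symm_apply_eq, h3]; exact k3)
  rw [Equiv.apply_symm_apply] at e
  have e2 := μ.injective e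
  rw [Equiv.symm_apply_eq] at e2
  rcases hmm with h | h | h
  · subst h; rw [h1] at e2; exact k1 e2
  · subst h; rw [h2] at e2; exact k2 e2
  · subst h; rw [h3] at e2; exact k3 e2

theorem impossible {Dm Dw : Set (PrefRel n)}
    (hDm : ∀ P ∈ Dm, IsPref P) (hDw : ∀ P ∈ Dw, IsPref P)
    (hrm : Rich Dm) (hrw : Rich Dw)
    {x y z : Fin n} {P1 P2 P3 : PrefRel n} (hP1 : P1 ∈ Dm) (hP2 : P2 ∈ Dm) (hP3 : P3 ∈ Dm)
    (k1 : P1 x y ∧ P1 y z) (k2 : P2 x z ∧ P2 z y) (k3 : P3 y x ∧ P3 x z)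
    {a b c : Fin n} {Q1 Q2 Q3 : PrefRel n} (hQ1 : Q1 ∈ Dw) (hQ2 : Q2 ∈ Dw) (hQ3 : Q3 ∈ Dw)
    (l1 : Q1 a b ∧ Q1 b c) (l2 : Q2 a c ∧ Q2 c b) (l3 : Q3 b a ∧ Q3 a c)
    (φ : Profile n → (Fin n ≃ Fin n)) (hst : StableRule Dm Dw φ) (hSP : SP Dm Dw φ) : False := by
  have tr : ∀ {D : Set (PrefRel n)}, (∀ P ∈ D, IsPref P) → ∀ {P}, P ∈ D → ∀ {u v t},
      P u v ∧ P v t → P u t := fun hD P hP u v t h =>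
    (show IsStrictTotalOrder (Fin n) P from hD P hP).trans _ _ _ h.1 h.2
  have ir : ∀ {D : Set (PrefRel n)}, (∀ P ∈ D, IsPref P) → ∀ {P}, P ∈ D → ∀ {u v},
      P u v → u ≠ v := by
    rintro D hD P hP u v h rfl
    exact (show IsStrictTotalOrder (Fin n) P from hD P hP).irrefl _ h
  have k1' := tr hDm hP1 k1
  have k2' := tr hDm hP2 k2
  have k3' := tr hDm hP3 k3
  have l1' := tr hDw hQ1 l1
  have l2' := tr hDw hQ2 l2
  have l3' := tr hDw hQ3 l3
  have hxy := ir hDm hP1 k1.1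
  have hyz := ir hDm hP1 k1.2
  have hxz := ir hDm hP1 k1'
  have hab := ir hDw hQ1 l1.1
  have hbc := ir hDw hQ1 l1.2
  have hac := ir hDw hQ1 l1'
  obtain ⟨σ, s1, s2, s3⟩ := exists_perm hab hac hbc hxy hxz hyz
  choose T hT hTt using hrm
  choose U hU hUt using hrw
  let F : Fin n → PrefRel n := fun m =>
    if m = a then P1 else if m = b then P3 else if m = c then P1 else T (σ m)
  let H : Fin n → PrefRel n := fun w =>
    if w = x then Q3 else if w = y then Q1 else if w = z then Q1 else U (σ.symm w)
  have hF : ∀ m, F m ∈ Dm := by intro m; simp only [F]; split_ifs <;> simp [*]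
  have hH : ∀ m, H m ∈ Dw := by intro m; simp only [H]; split_ifs <;> simp [*]
  have hF' : ∀ m, Function.update F a P2 m ∈ Dm := by
    intro m
    by_cases h : m = a
    · subst h; simpa using hP2
    · rw [Function.update_of_ne h]; exact hF m
  have hH' : ∀ m, Function.update H y Q2 m ∈ Dw := by
    intro m
    by_cases h : m = y
    · subst h; simpa using hQ2
    · rw [Function.update_of_ne h]; exact hH m
  have Fa : F a = P1 := by simp [F]
  have Fb : F b = P3 := by simp [F, hab.symm]
  have Fc : F c = P1 := by simp [F, hac.symm, hbc.symm]
  have Hx : H x = Q3 := by simp [H]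
  have Hy : H y = Q1 := by simp [H, hxy.symm]
  have Hz : H z = Q1 := by simp [H, hxz.symm, hyz.symm]
  have Fo : ∀ m, m ≠ a → m ≠ b → m ≠ c → TopOf (F m) (σ m) := by
    intro m h1 h2 h3; simp only [F, h1, h2, h3, if_false]; exact hTt _
  have Ho : ∀ m, m ≠ x → m ≠ y → m ≠ z → TopOf (H m) (σ.symm m) := by
    intro m h1 h2 h3; simp only [H, h1, h2, h3, if_false]; exact hUt _
  have F'a : Function.update F a P2 a = P2 := by simp
  have F'b : Function.update F a P2 b = P3 := by rw [Function.update_of_ne hab.symm, Fb]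
  have F'c : Function.update F a P2 c = P1 := by rw [Function.update_of_ne hac.symm, Fc]
  have H'x : Function.update H y Q2 x = Q3 := by rw [Function.update_of_ne hxy, Hx]
  have H'y : Function.update H y Q2 y = Q2 := by simp
  have H'z : Function.update H y Q2 z = Q1 := by rw [Function.update_of_ne hyz.symm, Hz]
  have F'o : ∀ m, m ≠ a → m ≠ b → m ≠ c → TopOf (Function.update F a P2 m) (σ m) := by
    intro m h1 h2 h3; rw [Function.update_of_ne h1]; exact Fo m h1 h2 h3
  have H'o : ∀ m, m ≠ x → m ≠ y → m ≠ z → TopOf (Function.update H y Q2 m) (σ.symm m) := by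
    intro m h1 h2 h3; rw [Function.update_of_ne h2]; exact Ho m h1 h2 h3
  have st0 := hst (F, H) ⟨hF, hH⟩
  have st1 := hst (F, Function.update H y Q2) ⟨hF, hH'⟩
  have st2 := hst (Function.update F a P2, H) ⟨hF', hH⟩
  have r0 := reduce st0 s1 s2 s3 Fo Ho
  have r1 := reduce st1 s1 s2 s3 Fo H'o
  have r2 := reduce st2 s1 s2 s3 F'o Ho
  have spa := (hSP (F, H) ⟨hF, hH⟩).1 a P2 hP2
  have spy := (hSP (F, H) ⟨hF, hH⟩).2 y Q2 hQ2
  simp only [] at spa spy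
  rw [Fa] at spa
  rw [Hy] at spy
  generalize φ (F, H) = μ0 at *
  generalize φ (F, Function.update H y Q2) = μ1 at *
  generalize φ (Function.update F a P2, H) = μ2 at *
  -- abstract blocking
  have blk : ∀ {p : Profile n} {μ : Fin n ≃ Fin n}, StableAt p μ → ∀ {m w m' w'},
      μ m = w' → μ m' = w → p.1 m w w' → p.2 w m m' → False := by
    intro p μ h m w m' w' e1 e2 g1 g2
    refine h m w ⟨by rw [e1]; exact g1, ?_⟩
    rw [← e2, Equiv.symm_apply_apply, e2]
    exact g2
  have inj : ∀ {μ : Fin n ≃ Fin n} {m m' w}, μ m = w → μ m' = w → m ≠ m' → False :=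
    fun {μ m m' w} e1 e2 h => h (μ.injective (e1.trans e2.symm))
  have c0 : (μ0 a = x ∧ μ0 b = y) ∨ (μ0 a = y ∧ μ0 b = x) := by
    rcases r0 a (Or.inl rfl) with ha | ha | ha <;>
    rcases r0 b (Or.inr (Or.inl rfl)) with hb | hb | hb <;>
    rcases r0 c (Or.inr (Or.inr rfl)) with hc | hc | hc <;>
    first
    | exact (inj ha hb hab).elim
    | exact (inj ha hc hac).elim
    | exact (inj hb hc hbc).elim
    | skip
    · exact Or.inl ⟨ha, hb⟩
    · exact (blk st0 hb hc (by simp only [Fb]; exact k3')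
        (by simp only [Hy]; exact l1.2)).elim
    · exact Or.inr ⟨ha, hb⟩
    · exact (blk st0 hb hc (by simp only [Fb]; exact k3.2)
        (by simp only [Hx]; exact l3')).elim
    · exact (blk st0 ha hc (by simp only [Fa]; exact k1.2)
        (by simp only [Hy]; exact l1')).elim
    · exact (blk st0 ha hc (by simp only [Fa]; exact k1')
        (by simp only [Hx]; exact l3.2)).elim
  have c1 : μ1 a = y := by
    rcases r1 a (Or.inl rfl) with ha | ha | ha <;>
    rcases r1 b (Or.inr (Or.inl rfl)) with hb | hb | hb <;>
    rcases r1 c (Or.inr (Or.inr rfl)) with hc | hc | hc <;>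
    first
    | exact (inj ha hb hab).elim
    | exact (inj ha hc hac).elim
    | exact (inj hb hc hbc).elim
    | skip
    · exact (blk st1 hc hb (by simp only [Fc]; exact k1.2)
        (by simp only [H'y]; exact l2.2)).elim
    · exact (blk st1 hb ha (by simp only [Fb]; exact k3.2)
        (by simp only [H'x]; exact l3.1)).elim
    · exact ha
    · exact ha
    · exact (blk st1 ha hc (by simp only [Fa]; exact k1.2)
        (by simp only [H'y]; exact l2.1)).elim
    · exact (blk st1 ha hc (by simp only [Fa]; exact k1')
        (by simp only [H'x]; exact l3.2)).elim
  have c2 : μ2 a = x := by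
    rcases r2 a (Or.inl rfl) with ha | ha | ha <;>
    rcases r2 b (Or.inr (Or.inl rfl)) with hb | hb | hb <;>
    rcases r2 c (Or.inr (Or.inr rfl)) with hc | hc | hc <;>
    first
    | exact (inj ha hb hab).elim
    | exact (inj ha hc hac).elim
    | exact (inj hb hc hbc).elim
    | skip
    · exact ha
    · exact ha
    · exact (blk st2 ha hc (by simp only [F'a]; exact k2.2)
        (by simp only [Hz]; exact l1')).elim
    · exact (blk st2 hb hc (by simp only [F'b]; exact k3.2)
        (by simp only [Hx]; exact l3')).elim
    · exact (blk st2 hb hc (by simp only [F'b]; exact k3.1)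
        (by simp only [Hy]; exact l1.2)).elim
    · exact (blk st2 ha hc (by simp only [F'a]; exact k2.1)
        (by simp only [Hx]; exact l3.2)).elim
  rcases c0 with ⟨h1, h2⟩ | ⟨h1, h2⟩
  · apply spy
    rw [← h2, Equiv.symm_apply_apply, h2, ← c1, Equiv.symm_apply_apply]
    exact l1.1
  · apply spa
    rw [h1, c2]
    exact k1.1

end Aux

/-- on a rich anonymous tree-single-peaked domain, a stable and
strategy-proof matching rule exists iff `Dm` or `Dw` satisfies top dominance. -/
theorem stmt12 {n : ℕ} (hn : 3 ≤ n) (Dm Dw : Set (PrefRel n))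
    (hDm : ∀ P ∈ Dm, IsPref P) (hDw : ∀ P ∈ Dw, IsPref P)
    (hrm : Rich Dm) (hrw : Rich Dw)
    (Gw : SimpleGraph (Fin n)) (hGw : Gw.IsTree) (hspm : ∀ P ∈ Dm, SPTree Gw P)
    (Gm : SimpleGraph (Fin n)) (hGm : Gm.IsTree) (hspw : ∀ P ∈ Dw, SPTree Gm P) :
    (∃ φ : Profile n → (Fin n ≃ Fin n), StableRule Dm Dw φ ∧ SP Dm Dw φ) ↔
      (TD Dm ∨ TD Dw) := by
  constructor
  · rintro ⟨φ, hst, hSP⟩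
    by_contra hcon
    rw [not_or] at hcon
    obtain ⟨x, y, z, P1, hP1, P2, hP2, P3, hP3, k1, k2, k3⟩ :=
      Aux.normalize hDm hrm hGw hspm hcon.1
    obtain ⟨a, b, c, Q1, hQ1, Q2, hQ2, Q3, hQ3, l1, l2, l3⟩ :=
      Aux.normalize hDw hrw hGm hspw hcon.2
    exact Aux.impossible hDm hDw hrm hrw hP1 hP2 hP3 k1 k2 k3 hQ1 hQ2 hQ3 l1 l2 l3 φ hst hSP
  · rintro (h | h)
    · exact Aux.exists_rule' Dm Dw hDm hDw h
    · exact Aux.exists_rule Dm Dw hDm hDw h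
end

section
/- Let D be a rich anonymous tree-single-peaked domain for a marriage market with n ≥ 5 men and n women. Then no stable matching rule on D is non-bossy. -/
theorem aux_mutual {n : ℕ} {p : Profile n} {μ : Fin n ≃ Fin n} (h : StableAt p μ) (m w : Fin n)
    (h1 : TopOf (p.1 m) w) (h2 : TopOf (p.2 w) m) : μ m = w := by
  by_contra hne
  refine h m w ⟨h1 _ hne, h2 _ ?_⟩
  intro he
  apply hne
  rw [← he]; simp

theorem aux_three {n : ℕ} (μ σ : Fin n ≃ Fin n) (x y z : Fin n)
    (h : ∀ m, m ≠ x → m ≠ y → m ≠ z → μ m = σ m) (u : Fin n) (hu : u = x ∨ u = y ∨ u = z) :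
    μ u = σ x ∨ μ u = σ y ∨ μ u = σ z := by
  by_contra hc
  push Not at hc
  obtain ⟨h1, h2, h3⟩ := hc
  have hx : σ.symm (μ u) ≠ x := fun e => h1 (by rw [← e]; simp)
  have hy : σ.symm (μ u) ≠ y := fun e => h2 (by rw [← e]; simp)
  have hz : σ.symm (μ u) ≠ z := fun e => h3 (by rw [← e]; simp)
  have := h _ hx hy hz
  rw [Equiv.apply_symm_apply] at this
  have := μ.injective this
  rw [this] at hx hy hz
  tauto

/-- key combinatorial structure on one side -/
theorem aux_tree {n : ℕ} (hn : 5 ≤ n) (D : Set (PrefRel n)) (hD : ∀ P ∈ D, IsPref P)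
    (hr : Rich D) (G : SimpleGraph (Fin n)) (hG : G.IsTree) (hsp : ∀ P ∈ D, SPTree G P) :
    ∃ P ∈ D, ∃ Q ∈ D, ∃ a b c d : Fin n, TopOf P a ∧ TopOf Q b ∧ P d b ∧ P b c ∧ Q a c ∧
      a ≠ b ∧ a ≠ c ∧ a ≠ d ∧ b ≠ c ∧ b ≠ d ∧ c ≠ d := by
  classical
  by_contra hcon
  have step : ∀ a : Fin n, ∃ g x : Fin n, G.Adj a g ∧ ∀ v, v ≠ a → v ≠ x →
      ∃ p : G.Walk v g, a ∉ p.support := by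
    intro a
    obtain ⟨P, hP, hPa⟩ := hr a
    haveI : IsStrictTotalOrder (Fin n) P := hD P hP
    have wf : WellFounded P := Finite.wellFounded_of_trans_of_irrefl P
    have hne : ({a}ᶜ : Set (Fin n)).Nonempty := by
      haveI : Nontrivial (Fin n) := Fin.nontrivial_iff_two_le.2 (by omega)
      obtain ⟨y, hy⟩ := exists_ne a
      exact ⟨y, hy⟩
    obtain ⟨x, hx, hmin⟩ := wf.has_min _ hne
    have hxa : x ≠ a := hx
    have hx2 : ∀ v, v ≠ a → v ≠ x → P x v := by
      intro v hv hvx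
      rcases trichotomous_of P x v with h | h | h
      · exact h
      · exact absurd h.symm hvx
      · exact absurd h (hmin v hv)
    have key : ∀ b c, b ≠ a → b ≠ x → c ≠ a → c ≠ x → b ≠ c → P b c → ¬ OnPath G a b c := by
      intro b c hba hbx hca hcx hbc hPbc hon
      obtain ⟨Q, hQ, hQb⟩ := hr b
      have : Q a c := (hsp Q hQ b a c hQb hon).resolve_left hca.symm
      exact hcon ⟨P, hP, Q, hQ, a, b, c, x, hPa, hQb, hx2 b hba hbx, hPbc, this, hba.symm,
        hca.symm, hxa.symm, hbc, hbx, hcx⟩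
    have conn : ∀ b c, b ≠ a → b ≠ x → c ≠ a → c ≠ x → ∃ p : G.Walk b c, a ∉ p.support := by
      intro b c hba hbx hca hcx
      by_cases hbc : b = c
      · subst hbc
        exact ⟨SimpleGraph.Walk.nil, by simpa using hba.symm⟩
      rcases trichotomous_of P b c with h | h | h
      · have := key b c hba hbx hca hcx hbc h
        unfold OnPath at this
        push Not at this
        obtain ⟨p, _, hp⟩ := this
        exact ⟨p, hp⟩
      · exact absurd h hbc
      · have := key c b hca hcx hba hbx (Ne.symm hbc) h
        unfold OnPath at this
        push Not at this
        obtain ⟨p, _, hp⟩ := this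
        exact ⟨p.reverse, by simpa using hp⟩
    obtain ⟨z, hz⟩ : ∃ z, z ∉ ({a, x} : Finset (Fin n)) := by
      by_contra hall
      push Not at hall
      have h1 : (Finset.univ : Finset (Fin n)) ⊆ {a, x} := fun v _ => hall v
      have h2 := Finset.card_le_card h1
      have h3 : ({a, x} : Finset (Fin n)).card ≤ 2 := Finset.card_le_two
      simp at h2
      omega
    simp only [Finset.mem_insert, Finset.mem_singleton, not_or] at hz
    obtain ⟨p, hp⟩ := (hG.connected a z).exists_isPath
    cases p with
    | nil => exact absurd rfl hz.1
    | @cons _ g _ hadj q =>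
      rw [SimpleGraph.Walk.cons_isPath_iff] at hp
      refine ⟨g, x, hadj, fun v hva hvx => ?_⟩
      obtain ⟨r, hr⟩ := conn v z hva hvx hz.1 hz.2
      refine ⟨r.append q.reverse, ?_⟩
      rw [SimpleGraph.Walk.mem_support_append_iff]
      simp only [SimpleGraph.Walk.support_reverse, List.mem_reverse]
      tauto
  choose g x hadj hconn using step
  have hcard := hG.card_edgeFinset
  simp only [Fintype.card_fin] at hcard
  obtain ⟨a, -, b, -, hab, he⟩ := Finset.exists_ne_map_eq_of_card_lt_of_maps_to
    (s := (Finset.univ : Finset (Fin n))) (t := G.edgeFinset)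
    (by simp; omega) (f := fun a => s(a, g a)) (by intro a _; simp [hadj])
  simp only [Sym2.eq_iff] at he
  have he2 : a = g b ∧ g a = b := by
    rcases he with h | h
    · exact absurd h.1 hab
    · exact h
  obtain ⟨h1, h2⟩ := he2
  obtain ⟨v, hv⟩ : ∃ v, v ∉ ({a, b, x a, x b} : Finset (Fin n)) := by
    by_contra hall
    push Not at hall
    have h1 : (Finset.univ : Finset (Fin n)) ⊆ {a, b, x a, x b} := fun v _ => hall v
    have h2 := Finset.card_le_card h1
    have h3 : ({a, b, x a, x b} : Finset (Fin n)).card ≤ 4 := Finset.card_le_four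
    simp at h2
    omega
  simp only [Finset.mem_insert, Finset.mem_singleton, not_or] at hv
  obtain ⟨va, vb, vxa, vxb⟩ := hv
  obtain ⟨p, hp⟩ := hconn a v va vxa
  obtain ⟨q, hq⟩ := hconn b v vb vxb
  obtain ⟨p, hp⟩ : ∃ p : G.Walk v b, a ∉ p.support := h2 ▸ ⟨p, hp⟩
  obtain ⟨q, hq⟩ : ∃ q : G.Walk v a, b ∉ q.support := h1 ▸ ⟨q, hq⟩
  have hba : G.Adj b a := by
    have := hadj a
    rw [h2] at this
    exact this.symm
  have hp' : a ∉ p.bypass.support := fun h => hp (p.support_bypass_subset_support h)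
  have hq' : b ∉ q.bypass.support := fun h => hq (q.support_bypass_subset_support h)
  have path1 : (p.bypass.concat hba).IsPath := p.bypass_isPath.concat hp' hba
  have := (hG.existsUnique_path v a).unique path1 q.bypass_isPath
  apply hq'
  rw [← this]
  simp [SimpleGraph.Walk.support_concat]

theorem aux_equiv {n : ℕ} (x1 x2 x3 x4 y1 y2 y3 y4 : Fin n)
   (hx : x1 ≠ x2 ∧ x1 ≠ x3 ∧ x1 ≠ x4 ∧ x2 ≠ x3 ∧ x2 ≠ x4 ∧ x3 ≠ x4)
   (hy : y1 ≠ y2 ∧ y1 ≠ y3 ∧ y1 ≠ y4 ∧ y2 ≠ y3 ∧ y2 ≠ y4 ∧ y3 ≠ y4) :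
   ∃ σ : Fin n ≃ Fin n, σ x1 = y1 ∧ σ x2 = y2 ∧ σ x3 = y3 ∧ σ x4 = y4 := by
  classical
  let f : Fin n → Fin n := fun x => if x = x1 then y1 else if x = x2 then y2 else
    if x = x3 then y3 else y4
  obtain ⟨hx1, hx2, hx3, hx4, hx5, hx6⟩ := hx
  obtain ⟨hy1, hy2, hy3, hy4, hy5, hy6⟩ := hy
  have f1 : f x1 = y1 := by simp [f]
  have f2 : f x2 = y2 := by simp [f, hx1.symm]
  have f3 : f x3 = y3 := by simp [f, hx2.symm, hx4.symm]
  have f4 : f x4 = y4 := by simp [f, hx3.symm, hx5.symm, hx6.symm]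
  obtain ⟨g, hg⟩ := Set.MapsTo.exists_equiv_extend_of_card_eq (s := {x1, x2, x3, x4})
    (t := Finset.univ) (f := f) (by simp) (by intro x _; simp) (by
      intro u hu v hv huv
      simp only [Set.mem_insert_iff, Set.mem_singleton_iff] at hu hv
      rcases hu with rfl | rfl | rfl | rfl <;> rcases hv with rfl | rfl | rfl | rfl <;>
        simp_all)
  refine ⟨g.trans (Equiv.subtypeUnivEquiv (by simp)), ?_, ?_, ?_, ?_⟩
  · simpa [f1] using hg x1 (by simp)
  · simpa [f2] using hg x2 (by simp)
  · simpa [f3] using hg x3 (by simp)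
  · simpa [f4] using hg x4 (by simp)

/-- on a rich anonymous tree-single-peaked domain with n ≥ 5, no stable
matching rule is non-bossy. -/
theorem stmt15 {n : ℕ} (hn : 5 ≤ n) (Dm Dw : Set (PrefRel n))
    (hDm : ∀ P ∈ Dm, IsPref P) (hDw : ∀ P ∈ Dw, IsPref P)
    (hrm : Rich Dm) (hrw : Rich Dw)
    (Gw : SimpleGraph (Fin n)) (hGw : Gw.IsTree) (hspm : ∀ P ∈ Dm, SPTree Gw P)
    (Gm : SimpleGraph (Fin n)) (hGm : Gm.IsTree) (hspw : ∀ P ∈ Dw, SPTree Gm P)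
    (φ : Profile n → (Fin n ≃ Fin n)) (hst : StableRule Dm Dw φ) :
    ¬ NonBossy Dm Dw φ := by
  classical
  intro hnb
  obtain ⟨P, hP, Q, hQ, w1, w2, w3, w4, tP, tQ, P42, P23, Q13, n12, n13, n14, n23, n24, n34⟩ :=
    aux_tree hn Dm hDm hrm Gw hGw hspm
  obtain ⟨R, hR, S, hS, m2, m1, m4, m3, tR, tS, R31, R14, S24, k21, k24, k23, k14, k13, k43⟩ :=
    aux_tree hn Dw hDw hrw Gm hGm hspw
  obtain ⟨σ, s1, s2, s3, s4⟩ := aux_equiv m1 m2 m3 m4 w1 w2 w3 w4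
    ⟨k21.symm, k13, k14, k23, k24, k43.symm⟩ ⟨n12, n13, n14, n23, n24, n34⟩
  choose T hT tT using hrm
  choose U hU tU using hrw
  let pm : Fin n → PrefRel n := fun m => if m = m1 then P else if m = m2 then Q else T (σ m)
  let pw : Fin n → PrefRel n :=
    fun w => if w = w1 then R else if w = w2 then S else U (σ.symm w)
  have pm1 : pm m1 = P := by simp [pm]
  have pm2 : pm m2 = Q := by simp [pm, k21]
  have pmo : ∀ m, m ≠ m1 → m ≠ m2 → TopOf (pm m) (σ m) := by
    intro m h1 h2
    simp only [pm, h1, h2, if_false]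
    exact tT _
  have pw1 : pw w1 = R := by simp [pw]
  have pw2 : pw w2 = S := by simp [pw, n12.symm]
  have pwo : ∀ m, m ≠ m1 → m ≠ m2 → TopOf (pw (σ m)) m := by
    intro m h1 h2
    have e1 : σ m ≠ w1 := by rw [← s1]; exact fun e => h1 (σ.injective e)
    have e2 : σ m ≠ w2 := by rw [← s2]; exact fun e => h2 (σ.injective e)
    simp only [pw, e1, e2, if_false, Equiv.symm_apply_apply]
    exact tU _
  have dpm : ∀ m, pm m ∈ Dm := by
    intro m; simp only [pm]; split_ifs <;> simp [hP, hQ, hT]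
  have dpw : ∀ m, pw m ∈ Dw := by
    intro m; simp only [pw]; split_ifs <;> simp [hR, hS, hU]
  have hdom : InDomain Dm Dw (pm, pw) := ⟨dpm, dpw⟩
  have hs := hst _ hdom
  have ho : ∀ m, m ≠ m1 → m ≠ m2 → φ (pm, pw) m = σ m := fun m h1 h2 =>
    aux_mutual hs m (σ m) (pmo m h1 h2) (pwo m h1 h2)
  obtain ⟨nbm, nbw⟩ := hnb _ hdom
  by_cases hA : φ (pm, pw) m1 = w1
  · -- man m3 deviates
    have nb := nbm m3 P hP
    have hdom' : InDomain Dm Dw (Function.update pm m3 P, pw) := by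
      refine ⟨fun m => ?_, dpw⟩
      by_cases h : m = m3
      · subst h; simpa using hP
      · simpa [h] using dpm m
    have hs' := hst _ hdom'
    simp only at nb
    set μ := φ (Function.update pm m3 P, pw) with hμ
    have ho' : ∀ m, m ≠ m1 → m ≠ m2 → m ≠ m3 → μ m = σ m := fun m h1 h2 h3 =>
      aux_mutual hs' m (σ m) (by simpa [h3] using pmo m h1 h2) (pwo m h1 h2)
    have c1 := aux_three μ σ m1 m2 m3 ho' m1 (by simp)
    have c2 := aux_three μ σ m1 m2 m3 ho' m2 (by simp)
    have c3 := aux_three μ σ m1 m2 m3 ho' m3 (by simp)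
    rw [s1, s2, s3] at c1 c2 c3
    have b31 := hs' m3 w1
    have b12 := hs' m1 w2
    have b21 := hs' m2 w1
    simp only [Blocks, Function.update_self, Function.update_of_ne k13, Function.update_of_ne k23,
      pm1, pm2, pw1, pw2] at b31 b12 b21
    have x1 : μ m1 ≠ w1 := by
      intro e
      apply b31
      constructor
      · apply tP
        intro e'
        exact k13 (μ.injective (e.trans e'.symm))
      · rw [← e]; simpa using R31
    have x2 : μ m1 ≠ w3 := by
      intro e
      apply b12
      constructor
      · rw [e]; exact P23
      · apply tS
        intro e'
        rw [← e'] at e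
        simp at e
        exact n23 e
    have x3 : μ m1 = w2 := (c1.resolve_left x1).resolve_right x2
    have x4 : μ m2 ≠ w3 := by
      intro e
      apply b21
      constructor
      · rw [e]; exact Q13
      · apply tR
        intro e'
        rw [← e'] at e
        simp at e
        exact n13 e
    have x5 : μ m2 = w1 := by
      have : μ m2 ≠ w2 := fun e => k21 (μ.injective (e.trans x3.symm))
      exact c2.resolve_right (fun h => h.elim this x4)
    have x6 : μ m3 = w3 := by
      have y1 : μ m3 ≠ w1 := fun e => k23 (μ.injective (x5.trans e.symm))
      have y2 : μ m3 ≠ w2 := fun e => k13 (μ.injective (x3.trans e.symm))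
      exact (c3.resolve_left y1).resolve_left y2
    have := nb (by rw [x6, ho m3 k13.symm k23.symm, s3])
    rw [← this] at hA
    exact x1 hA
  · -- woman w4 deviates
    have nb := nbw w4 S hS
    have hdom' : InDomain Dm Dw (pm, Function.update pw w4 S) := by
      refine ⟨dpm, fun m => ?_⟩
      by_cases h : m = w4
      · subst h; simpa using hS
      · simpa [h] using dpw m
    have hs' := hst _ hdom'
    simp only at nb
    set μ := φ (pm, Function.update pw w4 S) with hμ
    have ho' : ∀ m, m ≠ m1 → m ≠ m2 → m ≠ m4 → μ m = σ m := fun m h1 h2 h3 =>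
      aux_mutual hs' m (σ m) (pmo m h1 h2) (by
        have : σ m ≠ w4 := by rw [← s4]; exact fun e => h3 (σ.injective e)
        simpa [this] using pwo m h1 h2)
    have c1 := aux_three μ σ m1 m2 m4 ho' m1 (by simp)
    have c2 := aux_three μ σ m1 m2 m4 ho' m2 (by simp)
    have c4 := aux_three μ σ m1 m2 m4 ho' m4 (by simp)
    rw [s1, s2, s4] at c1 c2 c4
    have b14 := hs' m1 w4
    have b11 := hs' m1 w1
    have b22 := hs' m2 w2
    simp only [Blocks, Function.update_self, Function.update_of_ne n14, Function.update_of_ne n24,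
      pm1, pm2, pw1, pw2] at b14 b11 b22
    have x1 : μ m1 ≠ w2 := by
      intro e
      apply b14
      constructor
      · rw [e]; exact P42
      · apply tS
        intro e'
        rw [← e'] at e
        simp at e
        exact n24 e.symm
    have y1 : μ m4 ≠ w1 := by
      intro e
      apply b11
      constructor
      · apply tP
        intro e'
        exact k14 (μ.injective (e'.trans e.symm))
      · rw [← e]; simpa using R14
    have y2 : μ m4 ≠ w2 := by
      intro e
      apply b22
      constructor
      · apply tQ
        intro e'
        exact k24 (μ.injective (e'.trans e.symm))
      · rw [← e]; simpa using S24
    have x4 : μ m4 = w4 := (c4.resolve_left y1).resolve_left y2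
    have x5 : μ m1 = w1 := by
      have : μ m1 ≠ w4 := fun e => k14 (μ.injective (e.trans x4.symm))
      exact c1.resolve_right (fun h => h.elim x1 this)
    have := nb (by
      rw [← x4, Equiv.symm_apply_apply, x4, ← s4, ← ho m4 k14.symm k24.symm,
        Equiv.symm_apply_apply])
    rw [← this] at hA
    exact hA x5
end

section
/- Let D be a rich anonymous tree-single-peaked domain for a marriage market with n ≥ 5 men and n women. Then no stable matching rule on D is group strategy-proof. -/
theorem onPath_of {X : Type*} {G : SimpleGraph X} (hG : G.IsTree) {t b a : X}
    (p : G.Walk t b) (hp : p.IsPath) (ha : a ∈ p.support) : OnPath G a t b := by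
  intro q hq
  have h := hG.isAcyclic.path_unique ⟨q, hq⟩ ⟨p, hp⟩
  have h2 : q = p := congrArg Subtype.val h
  rw [h2]; exact ha

theorem exists_out {n : ℕ} (hn : 5 ≤ n) {G : SimpleGraph (Fin n)} (hG : G.Connected)
    (S : Finset (Fin n)) (hS : S.Nonempty) (hc : S.card ≤ 4) :
    ∃ u ∈ S, ∃ v, v ∉ S ∧ G.Adj u v := by
  obtain ⟨u, hu⟩ := hS
  have : ∃ v, v ∉ S := by
    by_contra hcon
    push Not at hcon
    have : S = Finset.univ := Finset.eq_univ_iff_forall.2 hcon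
    rw [this, Finset.card_univ, Fintype.card_fin] at hc
    omega
  obtain ⟨v, hv⟩ := this
  obtain ⟨w⟩ := hG.preconnected u v
  obtain ⟨x, hx, h1, h2⟩ := w.exists_boundary_dart (S : Set (Fin n)) (by simpa using hu)
    (by simpa using hv)
  exact ⟨x.fst, by simpa using h1, x.snd, by simpa using h2, x.adj⟩

theorem tree_shape {n : ℕ} (hn : 5 ≤ n) {G : SimpleGraph (Fin n)} (hG : G.Connected) :
    (∃ c x y z, G.Adj c x ∧ G.Adj c y ∧ G.Adj c z ∧ x ≠ y ∧ x ≠ z ∧ y ≠ z) ∨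
    (∃ a b c d e, G.Adj a b ∧ G.Adj b c ∧ G.Adj c d ∧ G.Adj d e ∧ [a, b, c, d, e].Nodup) := by
  have three : ∃ a b c, G.Adj a b ∧ G.Adj b c ∧ [a, b, c].Nodup := by
    obtain ⟨a, ha, b, hb, hab⟩ := exists_out hn hG {⟨0, by omega⟩} (by simp) (by simp)
    obtain ⟨u, hu, c, hc, huc⟩ := exists_out hn hG {a, b} (by simp)
      (Finset.card_le_two.trans (by norm_num))
    have := hab.ne
    have := huc.ne
    simp only [Finset.mem_insert, Finset.mem_singleton, not_or] at hu hc
    rcases hu with rfl | rfl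
    · exact ⟨b, u, c, hab.symm, huc, by simp; grind⟩
    · exact ⟨a, u, c, hab, huc, by simp; grind⟩
  obtain ⟨a, b, c, hab, hbc, hnd⟩ := three
  have four : (∃ c x y z, G.Adj c x ∧ G.Adj c y ∧ G.Adj c z ∧ x ≠ y ∧ x ≠ z ∧ y ≠ z) ∨
      ∃ a b c d, G.Adj a b ∧ G.Adj b c ∧ G.Adj c d ∧ [a, b, c, d].Nodup := by
    obtain ⟨u, hu, d, hd, hud⟩ := exists_out hn hG {a, b, c} (by simp)
      (Finset.card_le_three.trans (by norm_num))
    simp only [Finset.mem_insert, Finset.mem_singleton, not_or] at hu hd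
    simp at hnd
    rcases hu with rfl | rfl | rfl
    · exact Or.inr ⟨d, u, b, c, hud.symm, hab, hbc, by simp; grind⟩
    · exact Or.inl ⟨u, a, c, d, hab.symm, hbc, hud, by grind, by grind, by grind⟩
    · exact Or.inr ⟨a, b, u, d, hab, hbc, hud, by simp; grind⟩
  rcases four with h | ⟨a, b, c, d, hab, hbc, hcd, hnd⟩
  · exact Or.inl h
  obtain ⟨u, hu, e, he, hue⟩ := exists_out hn hG {a, b, c, d} (by simp) Finset.card_le_four
  simp only [Finset.mem_insert, Finset.mem_singleton, not_or] at hu he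
  simp at hnd
  rcases hu with rfl | rfl | rfl | rfl
  · exact Or.inr ⟨e, u, b, c, d, hue.symm, hab, hbc, hcd, by simp; grind⟩
  · exact Or.inl ⟨u, a, c, e, hab.symm, hbc, hue, by grind, by grind, by grind⟩
  · exact Or.inl ⟨u, b, d, e, hbc.symm, hcd, hue, by grind, by grind, by grind⟩
  · exact Or.inr ⟨a, b, c, u, e, hab, hbc, hcd, hue, by simp; grind⟩

theorem chain_rot {n : ℕ} {D : Set (PrefRel n)} (hD : ∀ P ∈ D, IsPref P)
    (hr : Rich D) {G : SimpleGraph (Fin n)} (hG : G.IsTree) (hsp : ∀ P ∈ D, SPTree G P)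
    {a b c d e : Fin n} (hab : G.Adj a b) (hbc : G.Adj b c) (hcd : G.Adj c d) (hde : G.Adj d e)
    (hnd : [a, b, c, d, e].Nodup) (P2 : PrefRel n) (hP2 : P2 ∈ D) (ht : TopOf P2 c)
    (hae : P2 a e) :
    ∃ x y z t, ∃ P1 ∈ D, ∃ P2 ∈ D, P1 x y ∧ P1 y z ∧ P1 z t ∧ TopOf P2 z ∧ P2 x t := by
  obtain ⟨P1, hP1, ht1⟩ := hr a
  simp at hnd
  have h2 : OnPath G b a c := onPath_of hG (.cons hab (.cons hbc .nil))
    (by simp [SimpleGraph.Walk.isPath_def]; grind) (by simp)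
  have h3 : OnPath G c a e :=
    onPath_of hG (.cons hab (.cons hbc (.cons hcd (.cons hde .nil))))
    (by simp [SimpleGraph.Walk.isPath_def]; grind) (by simp)
  refine ⟨a, b, c, e, P1, hP1, P2, hP2, ht1 b (by grind), ?_, ?_, ht, hae⟩
  · exact (hsp P1 hP1 a b c ht1 h2).resolve_left (by grind)
  · exact (hsp P1 hP1 a c e ht1 h3).resolve_left (by grind)

theorem star_rot {n : ℕ} {D : Set (PrefRel n)}
    (hr : Rich D) {G : SimpleGraph (Fin n)} (hG : G.IsTree) (hsp : ∀ P ∈ D, SPTree G P)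
    {c x y z : Fin n} (hx : G.Adj c x) (hy : G.Adj c y) (hz : G.Adj c z)
    (P1 : PrefRel n) (hP1 : P1 ∈ D) (ht : TopOf P1 c) (hyz' : y ≠ z)
    (hxy : P1 x y) (hyz : P1 y z) :
    ∃ x y z t, ∃ P1 ∈ D, ∃ P2 ∈ D, P1 x y ∧ P1 y z ∧ P1 z t ∧ TopOf P2 z ∧ P2 x t := by
  obtain ⟨P2, hP2, ht2⟩ := hr y
  have h2 : OnPath G c y z := onPath_of hG (.cons hy.symm (.cons hz .nil))
    (by have := hy.ne; have := hz.ne; simp [SimpleGraph.Walk.isPath_def]; grind) (by simp)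
  exact ⟨c, x, y, z, P1, hP1, P2, hP2, ht x hx.ne.symm, hxy, hyz, ht2,
    (hsp P2 hP2 y c z ht2 h2).resolve_left hz.ne⟩

theorem exists_rot {n : ℕ} (hn : 5 ≤ n) (D : Set (PrefRel n)) (hD : ∀ P ∈ D, IsPref P)
    (hr : Rich D) (G : SimpleGraph (Fin n)) (hG : G.IsTree) (hsp : ∀ P ∈ D, SPTree G P) :
    ∃ x y z t, ∃ P1 ∈ D, ∃ P2 ∈ D, P1 x y ∧ P1 y z ∧ P1 z t ∧ TopOf P2 z ∧ P2 x t := by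
  rcases tree_shape hn hG.connected with ⟨c, x, y, z, hx, hy, hz, hxy, hxz, hyz⟩ |
    ⟨a, b, c, d, e, hab, hbc, hcd, hde, hnd⟩
  · obtain ⟨P, hP, ht⟩ := hr c
    have tri : ∀ u v, u ≠ v → P u v ∨ P v u := by
      intro u v huv
      have := hD P hP
      unfold IsPref at this
      rcases trichotomous_of P u v with h | h | h
      · exact Or.inl h
      · exact absurd h huv
      · exact Or.inr h
    rcases tri x y hxy with h1 | h1 <;> rcases tri x z hxz with h2 | h2 <;>
      rcases tri y z hyz with h3 | h3
    · exact star_rot hr hG hsp hx hy hz P hP ht hyz h1 h3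
    · exact star_rot hr hG hsp hx hz hy P hP ht hyz.symm h2 h3
    · exact star_rot hr hG hsp hx hy hz P hP ht hyz h1 h3
    · exact star_rot hr hG hsp hz hx hy P hP ht hxy h2 h1
    · exact star_rot hr hG hsp hy hx hz P hP ht hxz h1 h2
    · exact star_rot hr hG hsp hy hx hz P hP ht hxz h1 h2
    · exact star_rot hr hG hsp hy hz hx P hP ht hxz.symm h3 h2
    · exact star_rot hr hG hsp hz hy hx P hP ht hxy.symm h3 h1
  · obtain ⟨P, hP, ht⟩ := hr c
    have := hD P hP
    unfold IsPref at this
    rcases trichotomous_of P a e with h | h | h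
    · exact chain_rot hD hr hG hsp hab hbc hcd hde hnd P hP ht h
    · simp at hnd; grind
    · exact chain_rot hD hr hG hsp hde.symm hcd.symm hbc.symm hab.symm
        (by simp at hnd ⊢; grind) P hP ht h

theorem parked {n : ℕ} {p : Profile n} {μ : Fin n ≃ Fin n} (hs : StableAt p μ) {m w : Fin n}
    (h1 : TopOf (p.1 m) w) (h2 : TopOf (p.2 w) m) : μ m = w := by
  by_contra h
  refine hs m w ⟨h1 _ h, h2 _ ?_⟩
  intro h'
  exact h (by rw [← h']; simp)

theorem caught {n : ℕ} {μ e : Fin n ≃ Fin n} (T : Fin n → Prop)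
    (h : ∀ m, ¬ T m → μ m = e m) (m : Fin n) (hm : T m) : ∃ i, T i ∧ μ m = e i := by
  refine ⟨e.symm (μ m), ?_, by simp⟩
  by_contra hT
  have := h _ hT
  simp at this
  rw [this] at hT
  exact hT hm

theorem ext4 {n : ℕ} (f g : Fin 4 → Fin n) (hf : f.Injective) (hg : g.Injective) :
    ∃ e : Fin n ≃ Fin n, ∀ i, e (f i) = g i := by
  classical
  let E : {x // x ∈ Set.range f} ≃ {x // x ∈ Set.range g} :=
    (Equiv.ofInjective f hf).symm.trans (Equiv.ofInjective g hg)
  refine ⟨E.extendSubtype, fun i => ?_⟩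
  rw [Equiv.extendSubtype_apply_of_mem E (f i) ⟨i, rfl⟩]
  have : (⟨f i, ⟨i, rfl⟩⟩ : {x // x ∈ Set.range f}) = Equiv.ofInjective f hf i := rfl
  rw [this]
  simp [E]

theorem core {n : ℕ} (Dm Dw : Set (PrefRel n))
    (hDm : ∀ P ∈ Dm, IsPref P) (hDw : ∀ P ∈ Dw, IsPref P)
    (hrm : Rich Dm) (hrw : Rich Dw)
    (φ : Profile n → (Fin n ≃ Fin n)) (hst : StableRule Dm Dw φ)
    {a d b c : Fin n} {P1 P2 : PrefRel n} (hP1 : P1 ∈ Dm) (hP2 : P2 ∈ Dm)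
    (had : P1 a d) (hdb : P1 d b) (hbc : P1 b c) (hb : TopOf P2 b) (hac : P2 a c)
    {m2 m3 m1 m4 : Fin n} {Q1 Q2 : PrefRel n} (hQ1 : Q1 ∈ Dw) (hQ2 : Q2 ∈ Dw)
    (h23 : Q1 m2 m3) (h31 : Q1 m3 m1) (h14 : Q1 m1 m4) (h1 : TopOf Q2 m1) (h24 : Q2 m2 m4) :
    ¬ GSP Dm Dw φ := by
  classical
  have p1 := hDm P1 hP1
  have q1 := hDw Q1 hQ1
  unfold IsPref at p1 q1
  have tp : ∀ {x y z}, P1 x y → P1 y z → P1 x z := fun h h' => _root_.trans h h'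
  have tq : ∀ {x y z}, Q1 x y → Q1 y z → Q1 x z := fun h h' => _root_.trans h h'
  have ip : ∀ {x y}, P1 x y → x ≠ y := by
    rintro x y h rfl; exact irrefl_of P1 x h
  have iq : ∀ {x y}, Q1 x y → x ≠ y := by
    rintro x y h rfl; exact irrefl_of Q1 x h
  have nad := ip had
  have ndb := ip hdb
  have nbc := ip hbc
  have hab := tp had hdb
  have nab := ip hab
  have hdc := tp hdb hbc
  have ndc := ip hdc
  have hac1 := tp had hdc
  have nac := ip hac1
  have n23 := iq h23
  have n31 := iq h31
  have n14 := iq h14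
  have h21 := tq h23 h31
  have n21 := iq h21
  have h34 := tq h31 h14
  have n34 := iq h34
  have h241 := tq h23 h34
  have n24 := iq h241
  clear ip iq tp tq
  obtain ⟨e, he⟩ := ext4 ![m1, m2, m3, m4] ![a, b, c, d]
    (by intro i j; fin_cases i <;> fin_cases j <;> simp <;> grind)
    (by intro i j; fin_cases i <;> fin_cases j <;> simp <;> grind)
  have e1 : e m1 = a := he 0
  have e2 : e m2 = b := he 1
  have e3 : e m3 = c := he 2
  have e4 : e m4 = d := he 3
  clear he
  have s1 : e.symm a = m1 := by simp [← e1]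
  have s2 : e.symm b = m2 := by simp [← e2]
  have s3 : e.symm c = m3 := by simp [← e3]
  have s4 : e.symm d = m4 := by simp [← e4]
  choose T hT hTt using hrm
  choose U hU hUt using hrw
  let qm : Fin n → PrefRel n := fun i => if i = m1 then P1 else if i = m2 then P2 else T (e i)
  let qw : Fin n → PrefRel n := fun w =>
    if w = a then Q1 else if w = b then Q2 else U (e.symm w)
  have qm1 : qm m1 = P1 := by simp [qm]
  have qm2 : qm m2 = P2 := by simp [qm, n21]
  have qwa : qw a = Q1 := by simp [qw]
  have qwb : qw b = Q2 := by simp [qw, nab.symm]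
  have qmo : ∀ i, i ≠ m1 → i ≠ m2 → qm i = T (e i) := by
    intro i h h'; simp [qm, h, h']
  have qwo : ∀ i, i ≠ m1 → i ≠ m2 → qw (e i) = U i := by
    intro i h h'
    have : e i ≠ a := fun h0 => h (by rw [← s1, ← h0]; simp)
    have : e i ≠ b := fun h0 => h' (by rw [← s2, ← h0]; simp)
    simp [qw, *]
  have hqm : ∀ i, qm i ∈ Dm := by
    intro i; simp only [qm]; split_ifs <;> first | assumption | apply hT
  have hqw : ∀ i, qw i ∈ Dw := by
    intro i; simp only [qw]; split_ifs <;> first | assumption | apply hU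
  clear_value qm qw
  have hq : InDomain Dm Dw (qm, qw) := ⟨hqm, hqw⟩
  have sq := hst _ hq
  have kq : ∀ i, ¬ (i = m1 ∨ i = m2) → φ (qm, qw) i = e i := by
    intro i hi
    push Not at hi
    apply parked sq
    · simp only [qmo i hi.1 hi.2]; exact hTt _
    · simp only [qwo i hi.1 hi.2]; exact hUt _
  have k3 := kq m3 (by grind)
  have k4 := kq m4 (by grind)
  rw [e3] at k3
  rw [e4] at k4
  have c1 := caught _ kq m1 (by simp)
  intro hgsp
  -- first deviation
  have hA : φ (qm, qw) m1 ≠ a := by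
    intro hA
    have hp : InDomain Dm Dw (Function.update qm m3 (T a), qw) := by
      refine ⟨fun i => ?_, hqw⟩
      by_cases h : i = m3
      · subst h; simp; exact hT _
      · simp [h]; exact hqm i
    have sp := hst _ hp
    have kp : ∀ i, ¬ (i = m1 ∨ i = m2 ∨ i = m3) →
        φ (Function.update qm m3 (T a), qw) i = e i := by
      intro i hi
      push Not at hi
      apply parked sp
      · simp only [Function.update_of_ne hi.2.2, qmo i hi.1 hi.2.1]; exact hTt _
      · simp only [qwo i hi.1 hi.2.1]; exact hUt _
    have r1 := caught _ kp m1 (by simp)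
    have r2 := caught _ kp m2 (by simp)
    have r3 := caught _ kp m3 (by simp)
    have B : ∀ m w m', φ (Function.update qm m3 (T a), qw) m' = w →
        Function.update qm m3 (T a) m w (φ (Function.update qm m3 (T a), qw) m) →
        ¬ qw w m m' := by
      rintro m w m' rfl h h'
      exact sp m _ ⟨h, by simpa using h'⟩
    have fin : φ (Function.update qm m3 (T a), qw) m2 = a ∧
        φ (Function.update qm m3 (T a), qw) m3 = c := by
      have ta := hTt a
      have um1 : Function.update qm m3 (T a) m1 = P1 := by
        rw [Function.update_of_ne n31.symm, qm1]
      have um2 : Function.update qm m3 (T a) m2 = P2 := by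
        rw [Function.update_of_ne n23, qm2]
      have um3 : Function.update qm m3 (T a) m3 = T a := by simp
      have uc := hUt m3
      have qc := qwo m3 n31 n23.symm
      rw [e3] at qc
      have inj := (φ (Function.update qm m3 (T a), qw)).injective
      have i12 := inj.ne n21
      have i13 := inj.ne n31
      have i23 := inj.ne n23
      generalize φ (Function.update qm m3 (T a), qw) = μ at *
      generalize Function.update qm m3 (T a) = um at *
      have x1 : μ m1 = a ∨ μ m1 = b ∨ μ m1 = c := by grind
      have x2 : μ m2 = a ∨ μ m2 = b ∨ μ m2 = c := by grind
      have x3 : μ m3 = a ∨ μ m3 = b ∨ μ m3 = c := by grind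
      clear r1 r2 r3 kp kq
      have b1 := B m2 a
      have b2 := B m3 a
      have b3 := B m1 b
      have f1 := h1 m3 n31
      have f2 := h1 m2 n21
      have f3 := ta b nab.symm
      have f4 := ta c nac.symm
      rw [qwa] at b1 b2
      rw [qwb] at b3
      rw [um1] at b3
      rw [um2] at b1
      rw [um3] at b2
      clear hTt hUt B qmo qwo hst sp hgsp c1
      grind
    refine hgsp _ hq ⟨_, {Sum.inl m3, Sum.inr a}, hp, ?_, ?_, ?_, ?_, Or.inr ⟨a, by simp, ?_⟩⟩
    · intro m hm
      simp at hm
      simp [hm]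
    · simp
    · intro m hm
      simp at hm
      subst hm
      exact Or.inl (by rw [fin.2, k3])
    · intro w hw
      simp at hw
      subst hw
      right
      rw [Equiv.symm_apply_eq _ |>.2 hA.symm, Equiv.symm_apply_eq _ |>.2 fin.1.symm]
      simpa [qwa] using h21
    · rw [Equiv.symm_apply_eq _ |>.2 hA.symm, Equiv.symm_apply_eq _ |>.2 fin.1.symm]
      simpa [qwa] using h21
  have hB : φ (qm, qw) m1 = b := by grind
  have hp : InDomain Dm Dw (qm, Function.update qw d (U m1)) := by
    refine ⟨hqm, fun i => ?_⟩
    by_cases h : i = d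
    · subst h; simp; exact hU _
    · simp [h]; exact hqw i
  have sp := hst _ hp
  have kp : ∀ i, ¬ (i = m1 ∨ i = m2 ∨ i = m4) →
      φ (qm, Function.update qw d (U m1)) i = e i := by
    intro i hi
    push Not at hi
    have : e i ≠ d := fun h0 => hi.2.2 (by rw [← s4, ← h0]; simp)
    apply parked sp
    · simp only [qmo i hi.1 hi.2.1]; exact hTt _
    · simp only [Function.update_of_ne this, qwo i hi.1 hi.2.1]; exact hUt _
  have r1 := caught _ kp m1 (by simp)
  have r2 := caught _ kp m2 (by simp)
  have r3 := caught _ kp m4 (by simp)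
  have B : ∀ m w m', φ (qm, Function.update qw d (U m1)) m' = w →
      qm m w (φ (qm, Function.update qw d (U m1)) m) →
      ¬ Function.update qw d (U m1) w m m' := by
    rintro m w m' rfl h h'
    exact sp m _ ⟨h, by simpa using h'⟩
  have fin : φ (qm, Function.update qw d (U m1)) m1 = a ∧
      φ (qm, Function.update qw d (U m1)) m4 = d := by
    have ta := hUt m1
    have um1 : Function.update qw d (U m1) a = Q1 := by
      rw [Function.update_of_ne nad, qwa]
    have um2 : Function.update qw d (U m1) b = Q2 := by
      rw [Function.update_of_ne ndb.symm, qwb]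
    have um3 : Function.update qw d (U m1) d = U m1 := by simp
    have inj := (φ (qm, Function.update qw d (U m1))).injective
    have i12 := inj.ne n21
    have i13 := inj.ne n14
    have i23 := inj.ne n24
    generalize φ (qm, Function.update qw d (U m1)) = μ at *
    generalize Function.update qw d (U m1) = um at *
    have x1 : μ m1 = a ∨ μ m1 = b ∨ μ m1 = d := by grind
    have x2 : μ m2 = a ∨ μ m2 = b ∨ μ m2 = d := by grind
    have x3 : μ m4 = a ∨ μ m4 = b ∨ μ m4 = d := by grind
    clear r1 r2 r3 kp kq
    have b1 := B m1 a
    have b2 := B m2 b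
    have b3 := B m1 d
    have f1 := hb a nab
    have f2 := hb d ndb
    have f3 := ta m2 n21
    have f4 := ta m4 n14.symm
    rw [um1, qm1] at b1
    rw [um2, qm2] at b2
    rw [um3, qm1] at b3
    clear hTt hUt B qmo qwo hst sp hgsp c1
    grind
  refine hgsp _ hq ⟨_, {Sum.inr d, Sum.inl m1}, hp, ?_, ?_, ?_, ?_, Or.inl ⟨m1, by simp, ?_⟩⟩
  · simp
  · intro m hm
    simp at hm
    simp [hm]
  · intro m hm
    simp at hm
    subst hm
    right
    rw [hB, fin.1]
    simpa [qm1] using hab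
  · intro w hw
    simp at hw
    subst hw
    left
    rw [Equiv.symm_apply_eq _ |>.2 k4.symm, Equiv.symm_apply_eq _ |>.2 fin.2.symm]
  · rw [hB, fin.1]
    simpa [qm1] using hab

/-- on a rich anonymous tree-single-peaked domain with n ≥ 5, no stable
matching rule is group strategy-proof. -/
theorem stmt16 {n : ℕ} (hn : 5 ≤ n) (Dm Dw : Set (PrefRel n))
    (hDm : ∀ P ∈ Dm, IsPref P) (hDw : ∀ P ∈ Dw, IsPref P)
    (hrm : Rich Dm) (hrw : Rich Dw)
    (Gw : SimpleGraph (Fin n)) (hGw : Gw.IsTree) (hspm : ∀ P ∈ Dm, SPTree Gw P)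
    (Gm : SimpleGraph (Fin n)) (hGm : Gm.IsTree) (hspw : ∀ P ∈ Dw, SPTree Gm P)
    (φ : Profile n → (Fin n ≃ Fin n)) (hst : StableRule Dm Dw φ) :
    ¬ GSP Dm Dw φ := by
  obtain ⟨a, d, b, c, P1, hP1, P2, hP2, had, hdb, hbc, hb, hac⟩ :=
    exists_rot hn Dm hDm hrm Gw hGw hspm
  obtain ⟨m2, m3, m1, m4, Q1, hQ1, Q2, hQ2, h23, h31, h14, h1, h24⟩ :=
    exists_rot hn Dw hDw hrw Gm hGm hspw
  exact core Dm Dw hDm hDw hrm hrw φ hst hP1 hP2 had hdb hbc hb hac hQ1 hQ2 h23 h31 h14 h1 h24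
end
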